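/- arXiv:0711.1135 — 3 statements merged into one kernel-verified Lean document; each statement's English description precedes it below -/
import Mathlib

section
/- Let Q be a tree quiver and V a representation of Q over a field K. Then for every vertex x: (i) Γ(V)_x = { v ∈ V_x : there exists a family (w_y)_{y∈Q₀} with w_y ∈ V_y, w_x = v, and V_a(w_{ta}) = w_{ha} for every arrow a }; and (ii) Δ(V)_x = ∩ { ker g_x : (g_y)_{y∈Q₀} a family with g_y ∈ V_y^* and g_{ha}∘V_a = g_{ta} for every arrow a }. -/
open Submodule

section Defs

variable {K : Type} [Field K]
variable {Q₀ Q₁ : Type} (tl hd : Q₁ → Q₀)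
variable (Vx : Q₀ → Type) [∀ x, AddCommGroup (Vx x)] [∀ x, Module K (Vx x)]
variable (Va : ∀ a : Q₁, Vx (tl a) →ₗ[K] Vx (hd a))

/-- `U` is a subrepresentation of the representation `(Vx, Va)`. -/
def IsSubrep (U : ∀ x, Submodule K (Vx x)) : Prop :=
  ∀ a : Q₁, (U (tl a)).map (Va a) ≤ U (hd a)

/-- `U` is an epimorphic subrepresentation: `V_a(U_{ta}) = U_{ha}` for every arrow. -/
def IsEpiSub (U : ∀ x, Submodule K (Vx x)) : Prop :=
  ∀ a : Q₁, (U (tl a)).map (Va a) = U (hd a)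

/-- `N` is a coclosed subrepresentation: it is a subrepresentation and
`V_a⁻¹(N_{ha}) ⊆ N_{ta}` for every arrow. -/
def IsCoclosedSub (N : ∀ x, Submodule K (Vx x)) : Prop :=
  IsSubrep tl hd Vx Va N ∧ ∀ a : Q₁, (N (hd a)).comap (Va a) ≤ N (tl a)

/-- `Γ(V)`, the sum of all epimorphic subrepresentations. -/
def Gamma (x : Q₀) : Submodule K (Vx x) :=
  ⨆ U : {U : ∀ y, Submodule K (Vx y) // IsEpiSub tl hd Vx Va U}, U.1 x

/-- `Δ(V)`, the intersection of all coclosed subrepresentations. -/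
def Delta (x : Q₀) : Submodule K (Vx x) :=
  ⨅ N : {N : ∀ y, Submodule K (Vx y) // IsCoclosedSub tl hd Vx Va N}, N.1 x

lemma le_gamma {U : ∀ y, Submodule K (Vx y)} (hU : IsEpiSub tl hd Vx Va U) (x : Q₀) :
    U x ≤ Gamma tl hd Vx Va x :=
  le_iSup (fun (W : {U // IsEpiSub tl hd Vx Va U}) => W.1 x) ⟨U, hU⟩

lemma delta_le {N : ∀ y, Submodule K (Vx y)} (hN : IsCoclosedSub tl hd Vx Va N) (x : Q₀) :
    Delta tl hd Vx Va x ≤ N x :=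
  iInf_le (fun (W : {N // IsCoclosedSub tl hd Vx Va N}) => W.1 x) ⟨N, hN⟩

lemma gamma_epi : IsEpiSub tl hd Vx Va (Gamma tl hd Vx Va) := by
  intro a
  apply le_antisymm
  · rw [Gamma, Submodule.map_iSup]
    refine iSup_le fun U => ?_
    rw [U.2 a]
    exact le_gamma tl hd Vx Va U.2 (hd a)
  · refine iSup_le fun U => ?_
    rw [← U.2 a]
    exact Submodule.map_mono (le_gamma tl hd Vx Va U.2 (tl a))

lemma gamma_subrep : IsSubrep tl hd Vx Va (Gamma tl hd Vx Va) :=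
  fun a => le_of_eq (gamma_epi tl hd Vx Va a)

lemma delta_subrep : IsSubrep tl hd Vx Va (Delta tl hd Vx Va) := by
  intro a
  have : ∀ N : {N // IsCoclosedSub tl hd Vx Va N},
      (Delta tl hd Vx Va (tl a)).map (Va a) ≤ N.1 (hd a) :=
    fun N => le_trans (Submodule.map_mono (delta_le tl hd Vx Va N.2 (tl a))) (N.2.1 a)
  exact le_iInf this

/-- `Γ(V) + Δ(V)` pointwise. -/
abbrev GD (x : Q₀) : Submodule K (Vx x) := Gamma tl hd Vx Va x ⊔ Delta tl hd Vx Va x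

/-- `Δ(V)`, seen inside `Γ(V) + Δ(V)`. -/
abbrev rkfDen (x : Q₀) : Submodule K (GD tl hd Vx Va x) :=
  (Delta tl hd Vx Va x).comap (GD tl hd Vx Va x).subtype

/-- The vertex spaces `(Γ(V)_x + Δ(V)_x)/Δ(V)_x` of the global tensor functor. -/
abbrev rkfSpace (x : Q₀) : Type :=
  GD tl hd Vx Va x ⧸ rkfDen tl hd Vx Va x

lemma gd_mapsTo (a : Q₁) : ∀ v ∈ GD tl hd Vx Va (tl a), Va a v ∈ GD tl hd Vx Va (hd a) := by
  intro v hv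
  have : (GD tl hd Vx Va (tl a)).map (Va a) ≤ GD tl hd Vx Va (hd a) := by
    rw [Submodule.map_sup]
    exact sup_le_sup (gamma_subrep tl hd Vx Va a) (delta_subrep tl hd Vx Va a)
  exact this ⟨v, hv, rfl⟩

/-- The arrow maps of the global tensor functor, induced by the `V_a`. -/
def rkfMap (a : Q₁) : rkfSpace tl hd Vx Va (tl a) →ₗ[K] rkfSpace tl hd Vx Va (hd a) :=
  Submodule.liftQ _
    ((rkfDen tl hd Vx Va (hd a)).mkQ ∘ₗ (Va a).restrict (gd_mapsTo tl hd Vx Va a))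
    (by
      intro v hv
      simp only [LinearMap.mem_ker, LinearMap.comp_apply, Submodule.mkQ_apply,
        Submodule.Quotient.mk_eq_zero]
      have hv' : (v : Vx (tl a)) ∈ Delta tl hd Vx Va (tl a) := hv
      show (Va a) (v : Vx (tl a)) ∈ Delta tl hd Vx Va (hd a)
      exact delta_subrep tl hd Vx Va a ⟨(v : Vx (tl a)), hv', rfl⟩)

/-- Isomorphism of quiver representations. -/
def RepIso (Wx : Q₀ → Type) [∀ x, AddCommGroup (Wx x)] [∀ x, Module K (Wx x)]
    (Wa : ∀ a : Q₁, Wx (tl a) →ₗ[K] Wx (hd a)) : Prop :=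
  ∃ φ : ∀ x, Vx x ≃ₗ[K] Wx x, ∀ (a : Q₁) (v : Vx (tl a)), φ (hd a) (Va a v) = Wa a (φ (tl a) v)

end Defs

/-!
Let `Q` be a tree, possibly infinite. A family of sets indexed by the vertices with a surjection
along every arrow has a section through any prescribed element: walking away from the chosen vertex
one applies the map of an arrow or picks a preimage, and since paths in a tree are unique no arrow
imposes a second condition. Applied to the maps `Γ(V)_{ta} → Γ(V)_{ha}`, which are onto, this gives
one inclusion of (i); the other holds because the lines spanned by the entries of a global section
form an epimorphic subrepresentation.

Part (ii) follows from (i) by duality. The annihilator of a coclosed subrepresentation of `V` is an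
epimorphic subrepresentation of the dual representation `V*` of the opposite quiver, so every
functional vanishing on `Δ(V)_x` extends to a compatible family of functionals. Conversely the
kernels of such a family form a coclosed subrepresentation.
-/

section Gluing

variable {V : Type*} {G : SimpleGraph V} {S : V → Type*}

/-- Parallel transport: move an element of `S u` along a walk, one edge at a time. -/
def walkTransport (next : ∀ u v, G.Adj u v → S u → S v) : ∀ {u v : V}, G.Walk u v → S u → S v
  | _, _, .nil, s => s
  | _, _, .cons h p, s => walkTransport next p (next _ _ h s)

lemma walkTransport_concat (next : ∀ u v, G.Adj u v → S u → S v) {u v w : V} (p : G.Walk u v)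
    (h : G.Adj v w) (s : S u) :
    walkTransport next (p.concat h) s = next v w h (walkTransport next p s) := by
  induction p with
  | nil => rfl
  | cons _ _ ih => exact ih h _

theorem exists_section_of_isTree (hG : G.IsTree) (R : ∀ u v, S u → S v → Prop)
    (hsymm : ∀ u v s t, R u v s t → R v u t s)
    (htotal : ∀ u v, G.Adj u v → ∀ s, ∃ t, R u v s t) (x : V) (s : S x) :
    ∃ w : ∀ v, S v, w x = s ∧ ∀ u v, G.Adj u v → R u v (w u) (w v) := by
  choose next R_next using htotal
  choose path isPath_path path_unique using hG.existsUnique_path x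
  let w (v : V) : S v := walkTransport next (path v) s
  have w_root : w x = s := by
    simp only [w, ← path_unique x .nil .nil, walkTransport]
  have w_step : ∀ u v, G.Adj u v → u ∈ (path v).support → R u v (w u) (w v) := by
    intro u v huv hu
    have path_eq : path v = (path u).concat huv :=
      hG.isAcyclic.path_concat (isPath_path u) (isPath_path v) huv hu
    simp only [w, path_eq, walkTransport_concat]
    exact R_next u v huv _
  refine ⟨w, w_root, fun u v huv => ?_⟩
  by_cases hu : u ∈ (path v).support
  · exact w_step u v huv hu
  · have hv : v ∈ (path u).support :=
      hG.isAcyclic.mem_support_of_ne_mem_support_of_adj_of_isPath (isPath_path u) (isPath_path v)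
        huv hu
    exact hsymm v u _ _ (w_step v u huv.symm hv)

end Gluing

section TreeQuiver

variable {Q₀ Q₁ : Type*} {tl hd : Q₁ → Q₀}

/-- The simple graph underlying a quiver: directions are forgotten, loops are dropped and multiple
arrows between two vertices are merged. -/
def underlyingGraph (tl hd : Q₁ → Q₀) : SimpleGraph Q₀ :=
  .fromEdgeSet (Set.range fun a => s(tl a, hd a))

/-- A tree quiver, not necessarily finite. The underlying undirected multigraph is a tree if it has
no loops and no multiple edges and the simple graph `underlyingGraph` is a tree. -/
structure IsTreeQuiver (tl hd : Q₁ → Q₀) : Prop where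
  tl_ne_hd : ∀ a, tl a ≠ hd a
  injective_ends : Function.Injective fun a => s(tl a, hd a)
  isTree_underlyingGraph : (underlyingGraph tl hd).IsTree

lemma connected_underlyingGraph [Nonempty Q₀]
    (hconn : ∀ x y : Q₀, Relation.ReflTransGen
      (fun u v => ∃ a : Q₁, (tl a = u ∧ hd a = v) ∨ (hd a = u ∧ tl a = v)) x y) :
    (underlyingGraph tl hd).Connected where
  preconnected x y := by
    rw [underlyingGraph, SimpleGraph.reachable_fromEdgeSet_eq_reflTransGen_toRel]
    refine Relation.ReflTransGen.mono (fun u v => ?_) x y (hconn x y)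
    rintro ⟨a, ⟨rfl, rfl⟩ | ⟨rfl, rfl⟩⟩
    exacts [⟨a, rfl⟩, ⟨a, Sym2.eq_swap⟩]

-- A connected graph with `n + 1` vertices has at least `n` edges, so none of the `n` arrows can be
-- a loop or repeat another arrow.
theorem isTreeQuiver_of_card_eq [Fintype Q₀] [Fintype Q₁]
    (hconn : ∀ x y : Q₀, Relation.ReflTransGen
      (fun u v => ∃ a : Q₁, (tl a = u ∧ hd a = v) ∨ (hd a = u ∧ tl a = v)) x y)
    (hcard : Fintype.card Q₀ = Fintype.card Q₁ + 1) : IsTreeQuiver tl hd := by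
  have : Nonempty Q₀ := Fintype.card_pos_iff.mp (by omega)
  have conn := connected_underlyingGraph hconn
  let ends (a : Q₁) : Sym2 Q₀ := s(tl a, hd a)
  have edgeSet_eq : (underlyingGraph tl hd).edgeSet = Set.range ends \ Sym2.diagSet :=
    SimpleGraph.edgeSet_fromEdgeSet _
  have arrows_le_edges : Fintype.card Q₁ ≤ (Set.range ends \ Sym2.diagSet).ncard := by
    have := conn.card_vert_le_card_edgeSet_add_one
    rw [Nat.card_eq_fintype_card, edgeSet_eq, Nat.card_coe_set_eq] at this
    omega
  have edges_le_range : (Set.range ends \ Sym2.diagSet).ncard ≤ (Set.range ends).ncard :=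
    Set.ncard_le_ncard Set.sdiff_subset
  have range_le_arrows : (Set.range ends).ncard ≤ Fintype.card Q₁ := by
    rw [← Set.image_univ, ← Nat.card_eq_fintype_card, ← Set.ncard_univ]
    exact Set.ncard_image_le
  refine ⟨fun a hloop => ?_, ?_, ?_⟩
  · have no_loops : Set.range ends \ Sym2.diagSet = Set.range ends :=
      Set.eq_of_subset_of_ncard_le Set.sdiff_subset (range_le_arrows.trans arrows_le_edges)
    exact (no_loops.ge (Set.mem_range_self a)).2 hloop
  · rw [← Set.injOn_univ]
    refine Set.injOn_of_ncard_image_eq ?_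
    rw [Set.image_univ, Set.ncard_univ, Nat.card_eq_fintype_card]
    exact range_le_arrows.antisymm (arrows_le_edges.trans edges_le_range)
  · rw [SimpleGraph.isTree_iff_connected_and_card, edgeSet_eq, Nat.card_coe_set_eq,
      Nat.card_eq_fintype_card]
    exact ⟨conn, by omega⟩

namespace IsTreeQuiver

lemma op (hQ : IsTreeQuiver tl hd) : IsTreeQuiver hd tl where
  tl_ne_hd a := (hQ.tl_ne_hd a).symm
  injective_ends := by simpa only [Sym2.eq_swap] using hQ.injective_ends
  isTree_underlyingGraph := by
    simpa only [underlyingGraph, Sym2.eq_swap] using hQ.isTree_underlyingGraph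

lemma adj (hQ : IsTreeQuiver tl hd) (a : Q₁) : (underlyingGraph tl hd).Adj (tl a) (hd a) :=
  (SimpleGraph.fromEdgeSet_adj _).mpr ⟨⟨a, rfl⟩, hQ.tl_ne_hd a⟩

theorem exists_section (hQ : IsTreeQuiver tl hd) {S : Q₀ → Type*}
    (f : ∀ a, S (tl a) → S (hd a)) (hf : ∀ a, Function.Surjective (f a)) (x : Q₀) (s : S x) :
    ∃ w : ∀ y, S y, w x = s ∧ ∀ a, f a (w (tl a)) = w (hd a) := by
  -- Quantifying over families `w` expresses that `s` and `t` are compatible with the arrow between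
  -- `u` and `v` in a way that is symmetric in `u` and `v` and free of transports along equalities.
  let R (u v : Q₀) (s : S u) (t : S v) : Prop :=
    ∀ w : ∀ y, S y, w u = s → w v = t →
      ∀ a, s(tl a, hd a) = s(u, v) → f a (w (tl a)) = w (hd a)
  have R_symm (u v : Q₀) (s : S u) (t : S v) (h : R u v s t) : R v u t s :=
    fun w hv hu a ha => h w hu hv a (ha.trans Sym2.eq_swap)
  have R_total (u v : Q₀) (huv : (underlyingGraph tl hd).Adj u v) (s : S u) : ∃ t, R u v s t := by
    obtain ⟨a, ha⟩ := ((SimpleGraph.fromEdgeSet_adj _).mp huv).1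
    suffices ∃ t, ∀ w : ∀ y, S y, w u = s → w v = t → f a (w (tl a)) = w (hd a) by
      obtain ⟨t, ht⟩ := this
      refine ⟨t, fun w hu hv b hb => ?_⟩
      obtain rfl : a = b := hQ.injective_ends (ha.trans hb.symm)
      exact ht w hu hv
    rcases Sym2.eq_iff.mp ha with ⟨rfl, rfl⟩ | ⟨rfl, rfl⟩
    · exact ⟨f a s, fun w hu hv => by rw [hu, hv]⟩
    · obtain ⟨t, ht⟩ := hf a s
      exact ⟨t, fun w hu hv => by rw [hu, hv, ht]⟩
  obtain ⟨w, hwx, hw⟩ :=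
    exists_section_of_isTree hQ.isTree_underlyingGraph R R_symm R_total x s
  exact ⟨w, hwx, fun a => hw _ _ (hQ.adj a) w rfl rfl a rfl⟩

end IsTreeQuiver

end TreeQuiver

theorem dualAnnihilator_comap {K V W : Type*} [Field K] [AddCommGroup V] [Module K V]
    [AddCommGroup W] [Module K W] (f : V →ₗ[K] W) (M : Submodule K W) :
    (M.comap f).dualAnnihilator = M.dualAnnihilator.map f.dualMap :=
  calc (M.comap f).dualAnnihilator
      = (LinearMap.ker (M.mkQ ∘ₗ f)).dualAnnihilator := by rw [LinearMap.ker_comp, ker_mkQ]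
    _ = LinearMap.range (M.mkQ ∘ₗ f).dualMap :=
        (LinearMap.range_dualMap_eq_dualAnnihilator_ker _).symm
    _ = (LinearMap.range M.mkQ.dualMap).map f.dualMap := by
        rw [← LinearMap.dualMap_comp_dualMap, LinearMap.range_comp]
    _ = M.dualAnnihilator.map f.dualMap := by rw [range_dualMap_mkQ_eq]

section Representation

variable {K : Type} [Field K] {Q₀ Q₁ : Type} {tl hd : Q₁ → Q₀}
variable {Vx : Q₀ → Type} [∀ x, AddCommGroup (Vx x)] [∀ x, Module K (Vx x)]
variable {Va : ∀ a : Q₁, Vx (tl a) →ₗ[K] Vx (hd a)}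

lemma isEpiSub_span_singleton {w : ∀ y, Vx y} (hw : ∀ a, Va a (w (tl a)) = w (hd a)) :
    IsEpiSub tl hd Vx Va fun y => K ∙ w y := fun a => by
  rw [map_span, Set.image_singleton, hw a]

lemma isCoclosedSub_iff_comap_eq {N : ∀ y, Submodule K (Vx y)} :
    IsCoclosedSub tl hd Vx Va N ↔ ∀ a, (N (hd a)).comap (Va a) = N (tl a) := by
  simp only [IsCoclosedSub, IsSubrep, map_le_iff_le_comap, ← forall_and, le_antisymm_iff, and_comm]

lemma isCoclosedSub_ker {g : ∀ y, Module.Dual K (Vx y)}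
    (hg : ∀ a, (g (hd a)).comp (Va a) = g (tl a)) :
    IsCoclosedSub tl hd Vx Va fun y => LinearMap.ker (g y) :=
  isCoclosedSub_iff_comap_eq.mpr fun a => by rw [← LinearMap.ker_comp, hg a]

variable (tl hd Vx Va) in
lemma isCoclosedSub_delta : IsCoclosedSub tl hd Vx Va (Delta tl hd Vx Va) :=
  isCoclosedSub_iff_comap_eq.mpr fun a => by
    simp only [Delta, comap_iInf]
    exact iInf_congr fun N => isCoclosedSub_iff_comap_eq.mp N.2 a

lemma IsCoclosedSub.isEpiSub_dualAnnihilator {N : ∀ y, Submodule K (Vx y)}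
    (hN : IsCoclosedSub tl hd Vx Va N) :
    IsEpiSub hd tl (fun y => Module.Dual K (Vx y)) (fun a => (Va a).dualMap)
      fun y => (N y).dualAnnihilator := fun a => by
  rw [← dualAnnihilator_comap, isCoclosedSub_iff_comap_eq.mp hN a]

namespace IsTreeQuiver

theorem exists_section_of_isEpiSub (hQ : IsTreeQuiver tl hd) {U : ∀ y, Submodule K (Vx y)}
    (hU : IsEpiSub tl hd Vx Va U) {x : Q₀} {v : Vx x} (hv : v ∈ U x) :
    ∃ w : ∀ y, Vx y, w x = v ∧ ∀ a, Va a (w (tl a)) = w (hd a) := by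
  have maps_to (a : Q₁) : ∀ u ∈ U (tl a), Va a u ∈ U (hd a) := map_le_iff_le_comap.mp (hU a).le
  have surjective (a : Q₁) : Function.Surjective ((Va a).restrict (maps_to a)) := by
    rintro ⟨t, ht⟩
    obtain ⟨s, hs, rfl⟩ := (hU a).ge ht
    exact ⟨⟨s, hs⟩, rfl⟩
  obtain ⟨w, hwx, hw⟩ := hQ.exists_section (S := fun y => U y) _ surjective x ⟨v, hv⟩
  exact ⟨fun y => w y, congrArg Subtype.val hwx, fun a => congrArg Subtype.val (hw a)⟩

theorem mem_gamma_iff (hQ : IsTreeQuiver tl hd) {x : Q₀} {v : Vx x} :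
    v ∈ Gamma tl hd Vx Va x ↔
      ∃ w : ∀ y, Vx y, w x = v ∧ ∀ a, Va a (w (tl a)) = w (hd a) := by
  refine ⟨hQ.exists_section_of_isEpiSub (gamma_epi tl hd Vx Va), ?_⟩
  rintro ⟨w, rfl, hw⟩
  exact le_gamma tl hd Vx Va (isEpiSub_span_singleton hw) x (mem_span_singleton_self _)

theorem mem_delta_iff (hQ : IsTreeQuiver tl hd) {x : Q₀} {v : Vx x} :
    v ∈ Delta tl hd Vx Va x ↔
      ∀ g : ∀ y, Module.Dual K (Vx y),
        (∀ a, (g (hd a)).comp (Va a) = g (tl a)) → g x v = 0 := by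
  refine ⟨fun hv g hg => delta_le tl hd Vx Va (isCoclosedSub_ker hg) x hv, fun h => ?_⟩
  rw [← Subspace.forall_mem_dualAnnihilator_apply_eq_zero_iff]
  intro f hf
  obtain ⟨g, rfl, hg⟩ := hQ.op.exists_section_of_isEpiSub
    (isCoclosedSub_delta tl hd Vx Va).isEpiSub_dualAnnihilator hf
  exact h g hg

end IsTreeQuiver

end Representation

theorem stmt_11_general {K : Type} [Field K] {Q₀ Q₁ : Type} (tl hd : Q₁ → Q₀)
    (htree : IsTreeQuiver tl hd)
    (Vx : Q₀ → Type) [∀ x, AddCommGroup (Vx x)] [∀ x, Module K (Vx x)]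
    (Va : ∀ a : Q₁, Vx (tl a) →ₗ[K] Vx (hd a)) :
    (∀ (x : Q₀) (v : Vx x), v ∈ Gamma tl hd Vx Va x ↔
      ∃ w : ∀ y, Vx y, w x = v ∧ ∀ a : Q₁, Va a (w (tl a)) = w (hd a)) ∧
    (∀ (x : Q₀) (v : Vx x), v ∈ Delta tl hd Vx Va x ↔
      ∀ g : ∀ y, Module.Dual K (Vx y),
        (∀ a : Q₁, (g (hd a)).comp (Va a) = g (tl a)) → g x v = 0) :=
  ⟨fun _ _ => htree.mem_gamma_iff, fun _ _ => htree.mem_delta_iff⟩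

/-- on a tree quiver, `Γ(V)_x` consists exactly of the vectors extendable to a
global section `(w_y)` (i.e. a morphism `𝟙 → V`), and `Δ(V)_x` is the common kernel at `x` of
all families of functionals `(g_y)` compatible with the arrows (morphisms `V → 𝟙`). -/
theorem stmt_11 {K : Type} [Field K] {Q₀ Q₁ : Type} [Fintype Q₀] [Fintype Q₁]
    (tl hd : Q₁ → Q₀)
    (hconn : ∀ x y : Q₀, Relation.ReflTransGen
      (fun u v => ∃ a : Q₁, (tl a = u ∧ hd a = v) ∨ (hd a = u ∧ tl a = v)) x y)
    (htree : Fintype.card Q₀ = Fintype.card Q₁ + 1)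
    (Vx : Q₀ → Type) [∀ x, AddCommGroup (Vx x)] [∀ x, Module K (Vx x)]
    [∀ x, FiniteDimensional K (Vx x)]
    (Va : ∀ a : Q₁, Vx (tl a) →ₗ[K] Vx (hd a)) :
    (∀ (x : Q₀) (v : Vx x), v ∈ Gamma tl hd Vx Va x ↔
      ∃ w : ∀ y, Vx y, w x = v ∧ ∀ a : Q₁, Va a (w (tl a)) = w (hd a)) ∧
    (∀ (x : Q₀) (v : Vx x), v ∈ Delta tl hd Vx Va x ↔
      ∀ g : ∀ y, Module.Dual K (Vx y),
        (∀ a : Q₁, (g (hd a)).comp (Va a) = g (tl a)) → g x v = 0) :=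
  stmt_11_general tl hd (isTreeQuiver_of_card_eq hconn htree) Vx Va
end

section
/- Let K be a field of characteristic 0, Q a quiver, V a representation of Q over K, and k ≥ 0. Let Λᵏ V be the representation with (Λᵏ V)_x = Λᵏ(V_x) (the k-th exterior power) and (Λᵏ V)_a = Λᵏ(V_a) (the induced map on exterior powers). Then rkf(Λᵏ V) is isomorphic to Λᵏ(rkf V) as representations of Q: there is a family of linear isomorphisms ψ_x : Λᵏ((rkf V)_x) → (rkf(Λᵏ V))_x with ψ_{ha} ∘ Λᵏ((rkf V)_a) = (rkf(Λᵏ V))_a ∘ ψ_{ta} for every arrow a. -/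
open Submodule

section ExtPow

variable {K : Type} [Field K]

/-- The induced map on `k`-th exterior powers. -/
noncomputable def extPowerMap (k : ℕ) {M N : Type} [AddCommGroup M] [AddCommGroup N]
    [Module K M] [Module K N] (f : M →ₗ[K] N) : ⋀[K]^k M →ₗ[K] ⋀[K]^k N :=
  (ExteriorAlgebra.map f).toLinearMap.restrict
    (p := ⋀[K]^k M) (q := ⋀[K]^k N)
    (by
      intro x hx
      have h1 : Submodule.map (ExteriorAlgebra.map f).toLinearMap (⋀[K]^k M) ≤ ⋀[K]^k N := by
        rw [ExteriorAlgebra.exteriorPower, ExteriorAlgebra.exteriorPower, Submodule.map_pow]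
        gcongr
        rw [ExteriorAlgebra.ι_range_map_map]
        exact LinearMap.map_le_range
      exact h1 ⟨x, hx, rfl⟩)

end ExtPow

/-!
The surjection `Λᵏ Γ(V) → Λᵏ(rkf V)` and the map `Λᵏ Γ(V) → rkf(Λᵏ V)` induced by `Γ(V) ⊆ V` are
homomorphisms of representations with the same kernel, so it suffices that the second one is
surjective, i.e. that `Γ(Λᵏ V)` lies in the image of `Λᵏ Γ(V)` plus `Δ(Λᵏ V)`. Since the coproduct
`Λᵏ⁺¹ V → V ⊗ Λᵏ V` followed by the wedge product is multiplication by `k + 1`, this reduces by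
induction, dividing by `k!` in total, to `Γ(V ⊗ W) ⊆ Γ(V) ⊗ Γ(W) + Δ(V ⊗ W)`.

For the tensor product, let `s ∈ Γ(V ⊗ W)` and let the functional `t` vanish on
`Γ(V) ⊗ Γ(W) + Δ(V ⊗ W)`. Contracting `s` with `t` gives endomorphisms of `V_x` and `W_x`, adjoint
to each other with respect to `t`, of trace `t s`. Along an arrow, elements of `Γ(V ⊗ W)` can be
pushed forward and lifted, functionals vanishing on `Δ(V ⊗ W)` can be pulled back and extended, and
the stable image of `g ∘ f` is mapped onto that of `f ∘ g` by `f`; hence the stable images of all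
such contractions sum to epimorphic subrepresentations and lie in `Γ(V)` and `Γ(W)`. As `t` vanishes
on `Γ(V) ⊗ Γ(W)`, adjointness makes the contraction nilpotent, so `t s = 0`.
-/

section StableRange

variable {R M N : Type*} [Ring R] [AddCommGroup M] [Module R M] [AddCommGroup N] [Module R N]

/-- The stable image `⋂ₙ im φⁿ` of an endomorphism, i.e. the part of the Fitting decomposition on
which `φ` is invertible when the module has finite length. -/
def stableRange (φ : Module.End R M) : Submodule R M :=
  ⨅ n : ℕ, LinearMap.range (φ ^ n)

lemma eventually_stableRange_eq_range_pow [IsArtinian R M] (φ : Module.End R M) :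
    ∀ᶠ n in Filter.atTop, stableRange φ = LinearMap.range (φ ^ n) :=
  φ.eventually_iInf_range_pow_eq

lemma map_stableRange_comp [IsArtinian R M] (f : M →ₗ[R] N) (g : N →ₗ[R] M) :
    (stableRange (g ∘ₗ f)).map f = stableRange (f ∘ₗ g) := by
  have pow_comp (n : ℕ) : ((f ∘ₗ g : Module.End R N) ^ n) ∘ₗ f
      = f ∘ₗ ((g ∘ₗ f : Module.End R M) ^ n) :=
    Module.End.commute_pow_left_of_commute (LinearMap.comp_assoc f g f) n
  apply le_antisymm
  · rintro _ ⟨v, hv, rfl⟩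
    refine Submodule.mem_iInf _ |>.2 fun n => ?_
    obtain ⟨u, rfl⟩ := Submodule.mem_iInf _ |>.1 hv n
    exact ⟨f u, LinearMap.congr_fun (pow_comp n) u⟩
  · obtain ⟨n, hn⟩ := (eventually_stableRange_eq_range_pow (g ∘ₗ f)).exists
    intro v hv
    obtain ⟨u, rfl⟩ := Submodule.mem_iInf _ |>.1 hv (n + 1)
    rw [hn, pow_succ]
    exact ⟨_, ⟨g u, rfl⟩, (LinearMap.congr_fun (pow_comp n) (g u)).symm⟩

end StableRange

section TensorContract

open TensorProduct

section CommSemiring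

variable {R V V' W W' X : Type*} [CommSemiring R] [AddCommMonoid V] [Module R V]
  [AddCommMonoid V'] [Module R V'] [AddCommMonoid W] [Module R W] [AddCommMonoid W'] [Module R W']
  [AddCommMonoid X] [Module R X]

/-- Contraction of a tensor in `V ⊗ W` with a functional on `X ⊗ W` along the common factor `W`:
`v ⊗ w` is sent to the map `u ↦ t (u ⊗ w) • v`. -/
noncomputable def tensorContract (t : X ⊗[R] W →ₗ[R] R) : V ⊗[R] W →ₗ[R] X →ₗ[R] V :=
  (LinearMap.lTensorHom V ∘ₗ TensorProduct.curry t).flip.compr₂ (TensorProduct.rid R V).toLinearMap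

lemma tensorContract_apply (t : X ⊗[R] W →ₗ[R] R) (s : V ⊗[R] W) (u : X) :
    tensorContract t s u
      = TensorProduct.rid R V (LinearMap.lTensor V (TensorProduct.curry t u) s) :=
  rfl

@[simp] lemma tensorContract_tmul (t : X ⊗[R] W →ₗ[R] R) (v : V) (w : W) (u : X) :
    tensorContract t (v ⊗ₜ[R] w) u = t (u ⊗ₜ w) • v := by
  simp [tensorContract_apply]

lemma tensorContract_comp_map (t : V' ⊗[R] W' →ₗ[R] R) (f : X →ₗ[R] V') (g : W →ₗ[R] W')
    (s : V ⊗[R] W) :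
    tensorContract (t ∘ₗ TensorProduct.map f g) s
      = tensorContract (t ∘ₗ LinearMap.lTensor V' g) s ∘ₗ f := by
  ext u
  induction s with
  | zero => simp
  | tmul v w => simp
  | add a b ha hb => simp_all

lemma tensorContract_map (t : X ⊗[R] W' →ₗ[R] R) (f : V →ₗ[R] V') (g : W →ₗ[R] W')
    (s : V ⊗[R] W) :
    tensorContract t (TensorProduct.map f g s)
      = f ∘ₗ tensorContract (t ∘ₗ LinearMap.lTensor X g) s := by
  ext u
  induction s with
  | zero => simp
  | tmul v w => simp
  | add a b ha hb => simp_all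

lemma tensorContract_adjoint (t : V ⊗[R] W →ₗ[R] R) (s : V ⊗[R] W) (u : V) (w : W) :
    t (tensorContract t s u ⊗ₜ w)
      = t (u ⊗ₜ tensorContract (t ∘ₗ (TensorProduct.comm R W V).toLinearMap)
          (TensorProduct.comm R V W s) w) := by
  induction s with
  | zero => simp
  | tmul v' w' =>
    simp only [tensorContract_tmul, TensorProduct.comm_tmul, LinearMap.comp_apply,
      LinearEquiv.coe_coe, ← TensorProduct.smul_tmul', TensorProduct.tmul_smul, map_smul,
      smul_eq_mul, mul_comm]
  | add a b ha hb => simp_all [TensorProduct.add_tmul, TensorProduct.tmul_add]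

lemma tensorContract_pow_adjoint (t : V ⊗[R] W →ₗ[R] R) (s : V ⊗[R] W) (n : ℕ) (u : V) (w : W) :
    t ((tensorContract t s ^ n : Module.End R V) u ⊗ₜ w)
      = t (u ⊗ₜ (tensorContract (t ∘ₗ (TensorProduct.comm R W V).toLinearMap)
          (TensorProduct.comm R V W s) ^ n : Module.End R W) w) := by
  induction n generalizing u with
  | zero => simp
  | succ n ih =>
    rw [pow_succ, Module.End.mul_apply, ih, tensorContract_adjoint, pow_succ',
      Module.End.mul_apply]

end CommSemiring

section CommRing

variable {R V W : Type*} [CommRing R] [AddCommGroup V] [Module R V] [AddCommGroup W] [Module R W]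

lemma trace_tensorContract [Module.Free R V] [Module.Finite R V]
    (t : V ⊗[R] W →ₗ[R] R) (s : V ⊗[R] W) :
    LinearMap.trace R V (tensorContract t s) = t s := by
  induction s with
  | zero => simp
  | tmul v w =>
    have : tensorContract t (v ⊗ₜ[R] w) = ((TensorProduct.curry t).flip w).smulRight v := by
      ext; simp
    simp [this, LinearMap.trace_smulRight]
  | add a b ha hb => simp only [map_add, ha, hb]

lemma isNilpotent_tensorContract [IsArtinian R V] [IsArtinian R W]
    (t : V ⊗[R] W →ₗ[R] R) (s : V ⊗[R] W)
    (h : ∀ v ∈ stableRange (tensorContract t s),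
      ∀ w ∈ stableRange (tensorContract (t ∘ₗ (TensorProduct.comm R W V).toLinearMap)
        (TensorProduct.comm R V W s)), t (v ⊗ₜ w) = 0) :
    IsNilpotent (tensorContract t s : Module.End R V) := by
  obtain ⟨n, hV, hW⟩ := ((eventually_stableRange_eq_range_pow (tensorContract t s)).and
    (eventually_stableRange_eq_range_pow (tensorContract
      (t ∘ₗ (TensorProduct.comm R W V).toLinearMap) (TensorProduct.comm R V W s)))).exists
  rw [hV, hW] at h
  refine ⟨1 + (n + n), LinearMap.ext fun v => ?_⟩
  have curry_eq_zero :
      TensorProduct.curry t ((tensorContract t s ^ (n + n) : Module.End R V) v) = 0 := by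
    ext w
    rw [TensorProduct.curry_apply, pow_add, Module.End.mul_apply, tensorContract_pow_adjoint]
    exact h _ ⟨v, rfl⟩ _ ⟨w, rfl⟩
  rw [pow_add, pow_one, Module.End.mul_apply, tensorContract_apply, curry_eq_zero]
  simp

lemma map_stableRange_tensorContract {V' W' : Type*} [AddCommGroup V'] [Module R V']
    [AddCommGroup W'] [Module R W'] [IsArtinian R V] (t : V' ⊗[R] W' →ₗ[R] R) (f : V →ₗ[R] V')
    (g : W →ₗ[R] W') (s : V ⊗[R] W) :
    (stableRange (tensorContract (t ∘ₗ TensorProduct.map f g) s)).map f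
      = stableRange (tensorContract t (TensorProduct.map f g s)) := by
  rw [tensorContract_comp_map, tensorContract_map, map_stableRange_comp]

end CommRing

end TensorContract

section Wedge

open TensorProduct

variable {R M N : Type*} [CommRing R] [AddCommGroup M] [Module R M] [AddCommGroup N] [Module R N]

variable (R M) in
/-- Left multiplication `u ↦ (ω ↦ u ∧ ω)`, as a bilinear map `M × Λᵏ M → Λᵏ⁺¹ M`. -/
noncomputable def wedgeLeft (k : ℕ) : M →ₗ[R] ⋀[R]^k M →ₗ[R] ⋀[R]^(k + 1) M :=
  exteriorPower.alternatingMapLinearEquiv.toLinearMap ∘ₗ (exteriorPower.ιMulti R (k + 1)).curryLeft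

@[simp] lemma wedgeLeft_ιMulti (k : ℕ) (u : M) (m : Fin k → M) :
    wedgeLeft R M k u (exteriorPower.ιMulti R k m)
      = exteriorPower.ιMulti R (k + 1) (Matrix.vecCons u m) := by
  simp [wedgeLeft]

lemma map_wedgeLeft (k : ℕ) (f : M →ₗ[R] N) (u : M) (ω : ⋀[R]^k M) :
    exteriorPower.map (k + 1) f (wedgeLeft R M k u ω)
      = wedgeLeft R N k (f u) (exteriorPower.map k f ω) := by
  suffices exteriorPower.map (k + 1) f ∘ₗ wedgeLeft R M k u
      = wedgeLeft R N k (f u) ∘ₗ exteriorPower.map k f from LinearMap.congr_fun this ω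
  refine exteriorPower.linearMap_ext (AlternatingMap.ext fun m => ?_)
  have comp_vecCons : f ∘ Matrix.vecCons u m = Matrix.vecCons (f u) (f ∘ m) := by
    ext i; cases i using Fin.cases <;> rfl
  simp [comp_vecCons]

variable (R M) in
/-- The component `Λᵏ⁺¹ M → M ⊗ Λᵏ M` of the coproduct of the exterior algebra:
`m₀ ∧ ⋯ ∧ mₖ ↦ ∑ᵢ (-1)ⁱ mᵢ ⊗ (m₀ ∧ ⋯ m̂ᵢ ⋯ ∧ mₖ)`. -/
noncomputable def exteriorCoproduct (k : ℕ) : ⋀[R]^(k + 1) M →ₗ[R] M ⊗[R] ⋀[R]^k M :=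
  exteriorPower.alternatingMapLinearEquiv <| AlternatingMap.alternatizeUncurryFin
    { toFun u := (TensorProduct.mk R M (⋀[R]^k M) u).compAlternatingMap (exteriorPower.ιMulti R k)
      map_add' u v := by ext m; simp
      map_smul' c u := by ext m; simp [TensorProduct.smul_tmul'] }

@[simp] lemma exteriorCoproduct_ιMulti (k : ℕ) (m : Fin (k + 1) → M) :
    exteriorCoproduct R M k (exteriorPower.ιMulti R (k + 1) m)
      = ∑ i : Fin (k + 1), (-1) ^ (i : ℕ) •
          (m i ⊗ₜ[R] exteriorPower.ιMulti R k (i.removeNth m)) := by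
  simp [exteriorCoproduct, AlternatingMap.alternatizeUncurryFin_apply]

lemma exteriorCoproduct_map (k : ℕ) (f : M →ₗ[R] N) (ω : ⋀[R]^(k + 1) M) :
    exteriorCoproduct R N k (exteriorPower.map (k + 1) f ω)
      = TensorProduct.map f (exteriorPower.map k f) (exteriorCoproduct R M k ω) := by
  suffices exteriorCoproduct R N k ∘ₗ exteriorPower.map (k + 1) f
      = TensorProduct.map f (exteriorPower.map k f) ∘ₗ exteriorCoproduct R M k from
    LinearMap.congr_fun this ω
  refine exteriorPower.linearMap_ext (AlternatingMap.ext fun m => ?_)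
  simp only [LinearMap.compAlternatingMap_apply, LinearMap.comp_apply, exteriorCoproduct_ιMulti,
    exteriorPower.map_apply_ιMulti, map_sum, map_zsmul, TensorProduct.map_tmul]
  rfl

lemma lift_wedgeLeft_exteriorCoproduct (k : ℕ) (ω : ⋀[R]^(k + 1) M) :
    TensorProduct.lift (wedgeLeft R M k) (exteriorCoproduct R M k ω) = (k + 1) • ω := by
  suffices TensorProduct.lift (wedgeLeft R M k) ∘ₗ exteriorCoproduct R M k
      = (k + 1) • LinearMap.id from LinearMap.congr_fun this ω
  refine exteriorPower.linearMap_ext (AlternatingMap.ext fun m => ?_)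
  have sum_vecCons := DFunLike.congr_fun
    (AlternatingMap.alternatizeUncurryFin_curryLeft (exteriorPower.ιMulti R (k + 1))) m
  rw [AlternatingMap.alternatizeUncurryFin_apply] at sum_vecCons
  simpa [add_smul] using sum_vecCons

end Wedge

section Rep

variable {K : Type} [Field K] {Q₀ Q₁ : Type} {tl hd : Q₁ → Q₀}
  {Vx : Q₀ → Type} [∀ x, AddCommGroup (Vx x)] [∀ x, Module K (Vx x)]
  {Va : ∀ a : Q₁, Vx (tl a) →ₗ[K] Vx (hd a)}

local notation "Γ(V)" => Gamma tl hd Vx Va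
local notation "Δ(V)" => Delta tl hd Vx Va

lemma map_mem_gamma {a : Q₁} {v : Vx (tl a)} (hv : v ∈ Γ(V) (tl a)) : Va a v ∈ Γ(V) (hd a) :=
  gamma_subrep tl hd Vx Va a ⟨v, hv, rfl⟩

lemma exists_mem_gamma_map_eq {a : Q₁} {v : Vx (hd a)} (hv : v ∈ Γ(V) (hd a)) :
    ∃ u ∈ Γ(V) (tl a), Va a u = v := by
  rwa [← gamma_epi tl hd Vx Va a] at hv

lemma isEpiSub_top (hV : ∀ a, Function.Surjective (Va a)) :
    IsEpiSub tl hd Vx Va fun _ => ⊤ :=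
  fun a => Submodule.map_top _ |>.trans <| LinearMap.range_eq_top.2 (hV a)

lemma isCoclosedSub_iff {N : ∀ x, Submodule K (Vx x)} :
    IsCoclosedSub tl hd Vx Va N ↔ ∀ a v, Va a v ∈ N (hd a) ↔ v ∈ N (tl a) :=
  ⟨fun h a v => ⟨fun hv => h.2 a hv, fun hv => h.1 a ⟨v, hv, rfl⟩⟩,
    fun h => ⟨fun a => Submodule.map_le_iff_le_comap.2 fun v => (h a v).2, fun a v => (h a v).1⟩⟩

lemma map_mem_delta_iff {a : Q₁} {v : Vx (tl a)} :
    Va a v ∈ Δ(V) (hd a) ↔ v ∈ Δ(V) (tl a) := by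
  simp only [Delta, Submodule.mem_iInf]
  exact forall_congr' fun N => isCoclosedSub_iff.1 N.2 a v

lemma isCoclosedSub_bot (hV : ∀ a, Function.Injective (Va a)) :
    IsCoclosedSub tl hd Vx Va fun _ => ⊥ :=
  isCoclosedSub_iff.2 fun a _ => map_eq_zero_iff (Va a) (hV a)

variable (tl hd Vx Va) in
/-- The arrow maps of the representation `Γ(V)`. -/
def gammaMap (a : Q₁) : Γ(V) (tl a) →ₗ[K] Γ(V) (hd a) :=
  (Va a).restrict fun _ => map_mem_gamma

lemma gammaMap_surjective (a : Q₁) : Function.Surjective (gammaMap tl hd Vx Va a) := by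
  rintro ⟨v, hv⟩
  obtain ⟨u, hu, rfl⟩ := exists_mem_gamma_map_eq hv
  exact ⟨⟨u, hu⟩, rfl⟩

variable (tl hd Vx Va) in
/-- The arrow maps of the quotient representation `V/Δ(V)`. -/
def deltaQuotMap (a : Q₁) : (Vx (tl a) ⧸ Δ(V) (tl a)) →ₗ[K] Vx (hd a) ⧸ Δ(V) (hd a) :=
  Submodule.mapQ _ _ (Va a) fun _ => map_mem_delta_iff.2

lemma deltaQuotMap_injective (a : Q₁) : Function.Injective (deltaQuotMap tl hd Vx Va a) := by
  rw [← LinearMap.ker_eq_bot, deltaQuotMap, Submodule.ker_mapQ, ← le_bot_iff,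
    Submodule.map_le_iff_le_comap]
  intro v hv
  simpa [map_mem_delta_iff] using hv

lemma exists_le_ker_comp_eq {a : Q₁} {t : Vx (tl a) →ₗ[K] K}
    (ht : Δ(V) (tl a) ≤ LinearMap.ker t) :
    ∃ t' : Vx (hd a) →ₗ[K] K, Δ(V) (hd a) ≤ LinearMap.ker t' ∧ t' ∘ₗ Va a = t := by
  obtain ⟨τ, hτ⟩ := LinearMap.dualMap_surjective_of_injective
    (deltaQuotMap_injective (Va := Va) a) (Submodule.liftQ _ t ht)
  refine ⟨τ ∘ₗ Submodule.mkQ _, fun v hv => ?_, LinearMap.ext fun v => ?_⟩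
  · simp [(Submodule.Quotient.mk_eq_zero _).2 hv]
  · simpa [deltaQuotMap] using LinearMap.congr_fun hτ (Submodule.Quotient.mk v)

end Rep

section RepHom

variable {K : Type} [Field K] {Q₀ Q₁ : Type} (tl hd : Q₁ → Q₀)
  (Vx : Q₀ → Type) [∀ x, AddCommGroup (Vx x)] [∀ x, Module K (Vx x)]
  (Va : ∀ a : Q₁, Vx (tl a) →ₗ[K] Vx (hd a))
  (Wx : Q₀ → Type) [∀ x, AddCommGroup (Wx x)] [∀ x, Module K (Wx x)]
  (Wa : ∀ a : Q₁, Wx (tl a) →ₗ[K] Wx (hd a))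
  (Yx : Q₀ → Type) [∀ x, AddCommGroup (Yx x)] [∀ x, Module K (Yx x)]
  (Ya : ∀ a : Q₁, Yx (tl a) →ₗ[K] Yx (hd a))

/-- Homomorphisms of quiver representations. -/
def IsRepHom (F : ∀ x, Vx x →ₗ[K] Wx x) : Prop :=
  ∀ (a : Q₁) (v : Vx (tl a)), F (hd a) (Va a v) = Wa a (F (tl a) v)

namespace IsRepHom

variable {tl hd Vx Va Wx Wa Yx Ya} {F : ∀ x, Vx x →ₗ[K] Wx x} {G : ∀ x, Vx x →ₗ[K] Yx x}

lemma comp_eq (hF : IsRepHom tl hd Vx Va Wx Wa F) (a : Q₁) :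
    F (hd a) ∘ₗ Va a = Wa a ∘ₗ F (tl a) :=
  LinearMap.ext (hF a)

lemma comp {H : ∀ x, Wx x →ₗ[K] Yx x} (hH : IsRepHom tl hd Wx Wa Yx Ya H)
    (hF : IsRepHom tl hd Vx Va Wx Wa F) : IsRepHom tl hd Vx Va Yx Ya fun x => H x ∘ₗ F x :=
  fun a v => (congrArg (H (hd a)) (hF a v)).trans (hH a (F (tl a) v))

lemma isEpiSub_map (hF : IsRepHom tl hd Vx Va Wx Wa F) {U : ∀ x, Submodule K (Vx x)}
    (hU : IsEpiSub tl hd Vx Va U) : IsEpiSub tl hd Wx Wa fun x => (U x).map (F x) := by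
  intro a
  rw [← Submodule.map_comp, ← hF.comp_eq, Submodule.map_comp, hU]

lemma isCoclosedSub_comap (hF : IsRepHom tl hd Vx Va Wx Wa F) {N : ∀ x, Submodule K (Wx x)}
    (hN : IsCoclosedSub tl hd Wx Wa N) : IsCoclosedSub tl hd Vx Va fun x => (N x).comap (F x) := by
  rw [isCoclosedSub_iff] at hN ⊢
  intro a v
  simp only [Submodule.mem_comap, hF a v, hN]

lemma map_mem_gamma (hF : IsRepHom tl hd Vx Va Wx Wa F) {x : Q₀} {v : Vx x}
    (hv : v ∈ Gamma tl hd Vx Va x) : F x v ∈ Gamma tl hd Wx Wa x :=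
  le_gamma tl hd Wx Wa (hF.isEpiSub_map (gamma_epi tl hd Vx Va)) x ⟨v, hv, rfl⟩

lemma map_mem_delta (hF : IsRepHom tl hd Vx Va Wx Wa F) {x : Q₀} {v : Vx x}
    (hv : v ∈ Delta tl hd Vx Va x) : F x v ∈ Delta tl hd Wx Wa x :=
  delta_le tl hd Vx Va
    (hF.isCoclosedSub_comap (isCoclosedSub_iff.2 fun _ _ => map_mem_delta_iff)) x hv

lemma range_le_gamma (hF : IsRepHom tl hd Vx Va Wx Wa F) (hV : ∀ a, Function.Surjective (Va a))
    (x : Q₀) : LinearMap.range (F x) ≤ Gamma tl hd Wx Wa x := by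
  rw [LinearMap.range_eq_map]
  exact le_gamma tl hd Wx Wa (hF.isEpiSub_map (isEpiSub_top hV)) x

lemma delta_le_ker (hF : IsRepHom tl hd Vx Va Wx Wa F) (hW : ∀ a, Function.Injective (Wa a))
    (x : Q₀) : Delta tl hd Vx Va x ≤ LinearMap.ker (F x) :=
  delta_le tl hd Vx Va (hF.isCoclosedSub_comap (isCoclosedSub_bot hW)) x

lemma repIso_of_ker_eq (hF : IsRepHom tl hd Vx Va Wx Wa F) (hG : IsRepHom tl hd Vx Va Yx Ya G)
    (F_surj : ∀ x, Function.Surjective (F x)) (G_surj : ∀ x, Function.Surjective (G x))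
    (ker_eq : ∀ x, LinearMap.ker (F x) = LinearMap.ker (G x)) :
    RepIso tl hd Wx Wa Yx Ya := by
  let φ (x : Q₀) : Wx x ≃ₗ[K] Yx x :=
    ((F x).quotKerEquivOfSurjective (F_surj x)).symm ≪≫ₗ
      Submodule.quotEquivOfEq _ _ (ker_eq x) ≪≫ₗ (G x).quotKerEquivOfSurjective (G_surj x)
  have φ_apply (x : Q₀) (v : Vx x) : φ x (F x v) = G x v := by
    have symm_apply : ((F x).quotKerEquivOfSurjective (F_surj x)).symm (F x v)
        = Submodule.Quotient.mk v := by
      rw [LinearEquiv.symm_apply_eq]; rfl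
    simp only [φ, LinearEquiv.trans_apply, symm_apply]
    rfl
  refine ⟨φ, fun a w => ?_⟩
  obtain ⟨v, rfl⟩ := F_surj _ w
  rw [← hF, φ_apply, φ_apply, hG]

end IsRepHom

end RepHom

section RepTensor

open TensorProduct

variable {K : Type} [Field K] {Q₀ Q₁ : Type} {tl hd : Q₁ → Q₀}
  {Vx : Q₀ → Type} [∀ x, AddCommGroup (Vx x)] [∀ x, Module K (Vx x)]
  {Va : ∀ a : Q₁, Vx (tl a) →ₗ[K] Vx (hd a)}
  {Wx : Q₀ → Type} [∀ x, AddCommGroup (Wx x)] [∀ x, Module K (Wx x)]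
  {Wa : ∀ a : Q₁, Wx (tl a) →ₗ[K] Wx (hd a)}

local notation "Γ(V)" => Gamma tl hd Vx Va
local notation "Δ(V)" => Delta tl hd Vx Va
local notation "Γ(W)" => Gamma tl hd Wx Wa
local notation "Δ(W)" => Delta tl hd Wx Wa
local notation "Vx⊗Wx" => fun y => Vx y ⊗[K] Wx y
local notation "Va⊗Wa" => fun a => TensorProduct.map (Va a) (Wa a)
local notation "Γ(V⊗W)" => Gamma tl hd Vx⊗Wx Va⊗Wa
local notation "Δ(V⊗W)" => Delta tl hd Vx⊗Wx Va⊗Wa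

lemma isRepHom_tensorComm :
    IsRepHom tl hd Vx⊗Wx Va⊗Wa (fun y => Wx y ⊗[K] Vx y) (fun a => TensorProduct.map (Wa a) (Va a))
      (fun x => (TensorProduct.comm K (Vx x) (Wx x)).toLinearMap) :=
  fun a z => (TensorProduct.map_comm (Wa a) (Va a) z).symm

lemma stableRange_tensorContract_le_gamma [∀ x, FiniteDimensional K (Vx x)] {x : Q₀}
    {s : Vx x ⊗[K] Wx x} (hs : s ∈ Γ(V⊗W) x) {t : Vx x ⊗[K] Wx x →ₗ[K] K}
    (ht : Δ(V⊗W) x ≤ LinearMap.ker t) : stableRange (tensorContract t s) ≤ Γ(V) x := by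
  let U (y : Q₀) : Submodule K (Vx y) :=
    ⨆ (s : Vx y ⊗[K] Wx y) (_ : s ∈ Γ(V⊗W) y) (t : Vx y ⊗[K] Wx y →ₗ[K] K)
      (_ : Δ(V⊗W) y ≤ LinearMap.ker t), stableRange (tensorContract t s)
  have le_U {y : Q₀} {s : Vx y ⊗[K] Wx y} (hs : s ∈ Γ(V⊗W) y) {t : Vx y ⊗[K] Wx y →ₗ[K] K}
      (ht : Δ(V⊗W) y ≤ LinearMap.ker t) : stableRange (tensorContract t s) ≤ U y :=
    le_iSup₂_of_le s hs <| le_iSup₂_of_le t ht le_rfl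
  have isEpiSub_U : IsEpiSub tl hd Vx Va U := by
    refine fun a => le_antisymm ?_ ?_
    · simp only [U, Submodule.map_iSup, iSup_le_iff]
      intro s hs t ht
      obtain ⟨t', ht', rfl⟩ := exists_le_ker_comp_eq ht
      rw [map_stableRange_tensorContract]
      exact le_U (map_mem_gamma hs) ht'
    · simp only [U, iSup_le_iff]
      intro s' hs' t ht
      obtain ⟨s, hs, rfl⟩ := exists_mem_gamma_map_eq hs'
      rw [← map_stableRange_tensorContract]
      exact Submodule.map_mono <| le_U hs fun z hz => ht (map_mem_delta_iff.2 hz)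
  exact (le_U hs ht).trans (le_gamma tl hd Vx Va isEpiSub_U x)

lemma gamma_tensor_le [∀ x, FiniteDimensional K (Vx x)] [∀ x, FiniteDimensional K (Wx x)]
    (x : Q₀) :
    Γ(V⊗W) x ≤ Submodule.map₂ (TensorProduct.mk K (Vx x) (Wx x)) (Γ(V) x) (Γ(W) x)
      ⊔ Δ(V⊗W) x := by
  intro s hs
  by_contra s_notMem
  obtain ⟨t, ts_ne_zero, le_ker⟩ := Submodule.exists_le_ker_of_notMem s_notMem
  obtain ⟨map₂_le_ker, delta_le_ker⟩ := sup_le_iff.1 le_ker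
  have hV : stableRange (tensorContract t s) ≤ Γ(V) x :=
    stableRange_tensorContract_le_gamma hs delta_le_ker
  have hW : stableRange (tensorContract (t ∘ₗ (TensorProduct.comm K (Wx x) (Vx x)).toLinearMap)
      (TensorProduct.comm K (Vx x) (Wx x) s)) ≤ Γ(W) x :=
    stableRange_tensorContract_le_gamma (isRepHom_tensorComm.map_mem_gamma hs) fun _ hz =>
      delta_le_ker (isRepHom_tensorComm.map_mem_delta hz)
  have nilpotent : IsNilpotent (tensorContract t s : Module.End K (Vx x)) :=
    isNilpotent_tensorContract t s fun v hv w hw =>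
      map₂_le_ker (Submodule.apply_mem_map₂ _ (hV hv) (hW hw))
  exact ts_ne_zero <| (trace_tensorContract t s).symm.trans
    (LinearMap.isNilpotent_trace_of_isNilpotent nilpotent).eq_zero

lemma tmul_mem_delta_right {x : Q₀} {v : Vx x} (hv : v ∈ Γ(V) x) {w : Wx x} (hw : w ∈ Δ(W) x) :
    v ⊗ₜ[K] w ∈ Δ(V⊗W) x := by
  let N (y : Q₀) : Submodule K (Wx y) :=
    ⨅ u ∈ Γ(V) y, (Δ(V⊗W) y).comap (TensorProduct.mk K (Vx y) (Wx y) u)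
  have mem_N {y : Q₀} {w : Wx y} : w ∈ N y ↔ ∀ u ∈ Γ(V) y, u ⊗ₜ[K] w ∈ Δ(V⊗W) y := by
    simp [N]
  have isCoclosedSub_N : IsCoclosedSub tl hd Wx Wa N := by
    refine isCoclosedSub_iff.2 fun a w => ?_
    simp only [mem_N]
    refine ⟨fun h u hu => map_mem_delta_iff.1 (h _ (map_mem_gamma hu)), fun h u' hu' => ?_⟩
    obtain ⟨u, hu, rfl⟩ := exists_mem_gamma_map_eq hu'
    exact map_mem_delta_iff.2 (h u hu)
  exact mem_N.1 (delta_le tl hd Wx Wa isCoclosedSub_N x hw) v hv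

lemma tmul_mem_delta_left {x : Q₀} {v : Vx x} (hv : v ∈ Δ(V) x) {w : Wx x} (hw : w ∈ Γ(W) x) :
    v ⊗ₜ[K] w ∈ Δ(V⊗W) x :=
  isRepHom_tensorComm.map_mem_delta (tmul_mem_delta_right hw hv)

end RepTensor

section ExtPowerMap

variable {K : Type} [Field K] {M N P : Type} [AddCommGroup M] [Module K M]
  [AddCommGroup N] [Module K N] [AddCommGroup P] [Module K P]

@[simp] lemma extPowerMap_ιMulti (k : ℕ) (f : M →ₗ[K] N) (m : Fin k → M) :
    extPowerMap k f (exteriorPower.ιMulti K k m) = exteriorPower.ιMulti K k (f ∘ m) :=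
  Subtype.ext (ExteriorAlgebra.map_apply_ιMulti f m)

lemma extPowerMap_eq_map (k : ℕ) (f : M →ₗ[K] N) : extPowerMap k f = exteriorPower.map k f :=
  exteriorPower.linearMap_ext <| AlternatingMap.ext fun m => by simp [Function.comp_def]

lemma extPowerMap_comp (k : ℕ) (g : N →ₗ[K] P) (f : M →ₗ[K] N) :
    extPowerMap k (g ∘ₗ f) = extPowerMap k g ∘ₗ extPowerMap k f := by
  simp only [extPowerMap_eq_map, exteriorPower.map_comp]

lemma extPowerMap_injective (k : ℕ) {f : M →ₗ[K] N} (hf : Function.Injective f) :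
    Function.Injective (extPowerMap k f) := by
  simpa only [extPowerMap_eq_map] using exteriorPower.map_injective_field hf

lemma extPowerMap_surjective (k : ℕ) {f : M →ₗ[K] N} (hf : Function.Surjective f) :
    Function.Surjective (extPowerMap k f) := by
  simpa only [extPowerMap_eq_map] using exteriorPower.map_surjective hf

lemma range_extPowerMap_zero (f : M →ₗ[K] N) : LinearMap.range (extPowerMap 0 f) = ⊤ := by
  rw [← top_le_iff, ← exteriorPower.ιMulti_span, Submodule.span_le]
  rintro _ ⟨m, rfl⟩
  exact ⟨exteriorPower.ιMulti K 0 ![], by rw [extPowerMap_ιMulti, Subsingleton.elim (f ∘ ![]) m]⟩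

end ExtPowerMap

section RepExteriorPower

open TensorProduct

variable {K : Type} [Field K] {Q₀ Q₁ : Type} {tl hd : Q₁ → Q₀}
  {Vx : Q₀ → Type} [∀ x, AddCommGroup (Vx x)] [∀ x, Module K (Vx x)]
  {Va : ∀ a : Q₁, Vx (tl a) →ₗ[K] Vx (hd a)}
  {Wx : Q₀ → Type} [∀ x, AddCommGroup (Wx x)] [∀ x, Module K (Wx x)]
  {Wa : ∀ a : Q₁, Wx (tl a) →ₗ[K] Wx (hd a)}

local notation "Γ(V)" => Gamma tl hd Vx Va
local notation "Δ(V)" => Delta tl hd Vx Va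
local notation "Λ[" k "]Vx" => fun y => ⋀[K]^k (Vx y)
local notation "Λ[" k "]Va" => fun a => extPowerMap k (Va a)
local notation "Λ[" k "]Wx" => fun y => ⋀[K]^k (Wx y)
local notation "Λ[" k "]Wa" => fun a => extPowerMap k (Wa a)
local notation "Γ(Λ[" k "]V)" => Gamma tl hd Λ[k]Vx Λ[k]Va
local notation "Δ(Λ[" k "]V)" => Delta tl hd Λ[k]Vx Λ[k]Va
local notation "Vx⊗Λ[" k "]Vx" => fun y => Vx y ⊗[K] ⋀[K]^k (Vx y)
local notation "Va⊗Λ[" k "]Va" => fun a => TensorProduct.map (Va a) (extPowerMap k (Va a))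
local notation "Δ(V⊗Λ[" k "]V)" => Delta tl hd Vx⊗Λ[k]Vx Va⊗Λ[k]Va

lemma IsRepHom.extPowerMap {F : ∀ x, Vx x →ₗ[K] Wx x} (hF : IsRepHom tl hd Vx Va Wx Wa F)
    (k : ℕ) :
    IsRepHom tl hd Λ[k]Vx Λ[k]Va Λ[k]Wx Λ[k]Wa (fun x => extPowerMap k (F x)) := by
  intro a ω
  simp only [← LinearMap.comp_apply, ← extPowerMap_comp, hF.comp_eq]

lemma isRepHom_lift_wedgeLeft (k : ℕ) :
    IsRepHom tl hd Vx⊗Λ[k]Vx Va⊗Λ[k]Va Λ[k + 1]Vx Λ[k + 1]Va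
      (fun x => TensorProduct.lift (wedgeLeft K (Vx x) k)) := by
  intro a z
  induction z with
  | zero => simp
  | tmul u ω => simp [extPowerMap_eq_map, map_wedgeLeft]
  | add z₁ z₂ h₁ h₂ => simp only [map_add, h₁, h₂]

lemma isRepHom_exteriorCoproduct (k : ℕ) :
    IsRepHom tl hd Λ[k + 1]Vx Λ[k + 1]Va Vx⊗Λ[k]Vx Va⊗Λ[k]Va
      (fun x => exteriorCoproduct K (Vx x) k) := by
  intro a ω
  simpa only [extPowerMap_eq_map] using exteriorCoproduct_map k (Va a) ω

lemma wedgeLeft_mem_delta_right {k : ℕ} {x : Q₀} {v : Vx x} (hv : v ∈ Γ(V) x)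
    {ω : ⋀[K]^k (Vx x)} (hω : ω ∈ Δ(Λ[k]V) x) : wedgeLeft K (Vx x) k v ω ∈ Δ(Λ[k + 1]V) x :=
  (isRepHom_lift_wedgeLeft k).map_mem_delta (tmul_mem_delta_right hv hω)

lemma wedgeLeft_mem_delta_left {k : ℕ} {x : Q₀} {v : Vx x} (hv : v ∈ Δ(V) x)
    {ω : ⋀[K]^k (Vx x)} (hω : ω ∈ Γ(Λ[k]V) x) : wedgeLeft K (Vx x) k v ω ∈ Δ(Λ[k + 1]V) x :=
  (isRepHom_lift_wedgeLeft k).map_mem_delta (tmul_mem_delta_left hv hω)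

lemma isRepHom_gamma_subtype :
    IsRepHom tl hd (fun x => Γ(V) x) (gammaMap tl hd Vx Va) Vx Va (fun x => (Γ(V) x).subtype) :=
  fun _ _ => rfl

lemma isRepHom_delta_mkQ :
    IsRepHom tl hd Vx Va (fun x => Vx x ⧸ Δ(V) x) (deltaQuotMap tl hd Vx Va)
      (fun x => (Δ(V) x).mkQ) :=
  fun _ _ => rfl

lemma range_extPowerMap_le_gamma (k : ℕ) (x : Q₀) :
    LinearMap.range (extPowerMap k (Γ(V) x).subtype) ≤ Γ(Λ[k]V) x :=
  (isRepHom_gamma_subtype.extPowerMap k).range_le_gamma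
    (fun a => extPowerMap_surjective k (gammaMap_surjective a)) x

lemma delta_le_ker_extPowerMap (k : ℕ) (x : Q₀) :
    Δ(Λ[k]V) x ≤ LinearMap.ker (extPowerMap k (Δ(V) x).mkQ) :=
  (isRepHom_delta_mkQ.extPowerMap k).delta_le_ker
    (fun a => extPowerMap_injective k (deltaQuotMap_injective a)) x

lemma ιMulti_mem_gamma {k : ℕ} {x : Q₀} {m : Fin k → Vx x} (hm : ∀ i, m i ∈ Γ(V) x) :
    exteriorPower.ιMulti K k m ∈ Γ(Λ[k]V) x :=
  range_extPowerMap_le_gamma k x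
    ⟨exteriorPower.ιMulti K k fun i => ⟨m i, hm i⟩, extPowerMap_ιMulti k _ _⟩

lemma map₂_wedgeLeft_le {k : ℕ} {x : Q₀} (hΓ : Γ(Λ[k]V) x
      ≤ LinearMap.range (extPowerMap k (Γ(V) x).subtype) ⊔ Δ(Λ[k]V) x) :
    Submodule.map₂ (wedgeLeft K (Vx x) k) (Γ(V) x) (Γ(Λ[k]V) x)
      ≤ LinearMap.range (extPowerMap (k + 1) (Γ(V) x).subtype) ⊔ Δ(Λ[k + 1]V) x := by
  refine Submodule.map₂_le.2 fun u hu ω hω => ?_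
  obtain ⟨_, ⟨β, rfl⟩, δ, hδ, rfl⟩ := Submodule.mem_sup.1 (hΓ hω)
  rw [map_add]
  refine add_mem (Submodule.mem_sup_left ⟨wedgeLeft K (Γ(V) x) k ⟨u, hu⟩ β, ?_⟩)
    (Submodule.mem_sup_right (wedgeLeft_mem_delta_right hu hδ))
  simp only [extPowerMap_eq_map, map_wedgeLeft, Submodule.subtype_apply]

lemma gamma_exteriorPower_le [∀ x, FiniteDimensional K (Vx x)] {k : ℕ}
    (hk : (k.factorial : K) ≠ 0) (x : Q₀) :
    Γ(Λ[k]V) x ≤ LinearMap.range (extPowerMap k (Γ(V) x).subtype) ⊔ Δ(Λ[k]V) x := by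
  induction k with
  | zero => simp [range_extPowerMap_zero]
  | succ k ih =>
    rw [Nat.factorial_succ, Nat.cast_mul] at hk
    intro ω hω
    have le_comap : Submodule.map₂ (TensorProduct.mk K _ _) (Γ(V) x) (Γ(Λ[k]V) x) ⊔ Δ(V⊗Λ[k]V) x
        ≤ (LinearMap.range (extPowerMap (k + 1) (Γ(V) x).subtype) ⊔ Δ(Λ[k + 1]V) x).comap
          (TensorProduct.lift (wedgeLeft K (Vx x) k)) :=
      sup_le
        (Submodule.map₂_le.2 fun u hu η hη => map₂_wedgeLeft_le (ih (right_ne_zero_of_mul hk))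
          (Submodule.apply_mem_map₂ _ hu hη))
        fun z hz => Submodule.mem_sup_right ((isRepHom_lift_wedgeLeft k).map_mem_delta hz)
    have wedge_mem :=
      le_comap (gamma_tensor_le x ((isRepHom_exteriorCoproduct k).map_mem_gamma hω))
    rwa [Submodule.mem_comap, lift_wedgeLeft_exteriorCoproduct, ← Nat.cast_smul_eq_nsmul K,
      Submodule.smul_mem_iff _ (left_ne_zero_of_mul hk)] at wedge_mem

lemma ιMulti_sub_ιMulti_mem_delta {k : ℕ} {x : Q₀} {m m' : Fin k → Vx x}
    (hm : ∀ i, m i ∈ Γ(V) x) (hm' : ∀ i, m' i ∈ Γ(V) x) (hsub : ∀ i, m i - m' i ∈ Δ(V) x) :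
    exteriorPower.ιMulti K k m - exteriorPower.ιMulti K k m' ∈ Δ(Λ[k]V) x := by
  induction k with
  | zero => simp [Subsingleton.elim m m']
  | succ k ih =>
    have ιMulti_eq (n : Fin (k + 1) → Vx x) : exteriorPower.ιMulti K (k + 1) n
        = wedgeLeft K (Vx x) k (n 0) (exteriorPower.ιMulti K k (Fin.tail n)) := by
      rw [wedgeLeft_ιMulti]
      exact congrArg _ (Fin.cons_self_tail n).symm
    have split : exteriorPower.ιMulti K (k + 1) m - exteriorPower.ιMulti K (k + 1) m'
        = wedgeLeft K (Vx x) k (m 0 - m' 0) (exteriorPower.ιMulti K k (Fin.tail m))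
          + wedgeLeft K (Vx x) k (m' 0) (exteriorPower.ιMulti K k (Fin.tail m)
            - exteriorPower.ιMulti K k (Fin.tail m')) := by
      rw [ιMulti_eq m, ιMulti_eq m', map_sub, map_sub, LinearMap.sub_apply]
      abel
    rw [split]
    exact add_mem (wedgeLeft_mem_delta_left (hsub 0) (ιMulti_mem_gamma fun i => hm i.succ))
      (wedgeLeft_mem_delta_right (hm' 0)
        (ih (fun i => hm i.succ) (fun i => hm' i.succ) fun i => hsub i.succ))

lemma extPowerMap_sub_extPowerMap_mem_delta {X : Type} [AddCommGroup X] [Module K X] {k : ℕ}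
    {x : Q₀} {f g : X →ₗ[K] Vx x} (hf : ∀ u, f u ∈ Γ(V) x) (hg : ∀ u, g u ∈ Γ(V) x)
    (hsub : ∀ u, f u - g u ∈ Δ(V) x) (α : ⋀[K]^k X) :
    extPowerMap k f α - extPowerMap k g α ∈ Δ(Λ[k]V) x := by
  suffices ⊤ ≤ (Δ(Λ[k]V) x).comap (extPowerMap k f - extPowerMap k g) from this trivial
  rw [← exteriorPower.ιMulti_span, Submodule.span_le]
  rintro _ ⟨m, rfl⟩
  simpa using ιMulti_sub_ιMulti_mem_delta (m := f ∘ m) (m' := g ∘ m) (fun i => hf _)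
    (fun i => hg _) fun i => hsub _

end RepExteriorPower

section Rkf

variable {K : Type} [Field K] {Q₀ Q₁ : Type} (tl hd : Q₁ → Q₀)
  (Vx : Q₀ → Type) [∀ x, AddCommGroup (Vx x)] [∀ x, Module K (Vx x)]
  (Va : ∀ a : Q₁, Vx (tl a) →ₗ[K] Vx (hd a))

local notation "Γ(V)" => Gamma tl hd Vx Va
local notation "Δ(V)" => Delta tl hd Vx Va
local notation "Λ[" k "]Vx" => fun y => ⋀[K]^k (Vx y)
local notation "Λ[" k "]Va" => fun a => extPowerMap k (Va a)
local notation "Γ(Λ[" k "]V)" => Gamma tl hd Λ[k]Vx Λ[k]Va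
local notation "Δ(Λ[" k "]V)" => Delta tl hd Λ[k]Vx Λ[k]Va

/-- The projection `Γ(V) → rkf V` with kernel `Γ(V) ∩ Δ(V)`. -/
def gammaToRkf (x : Q₀) : Γ(V) x →ₗ[K] rkfSpace tl hd Vx Va x :=
  LinearMap.subToSupQuotient (Γ(V) x) (Δ(V) x)

/-- The embedding `rkf V → V/Δ(V)`. -/
def rkfToQuot (x : Q₀) : rkfSpace tl hd Vx Va x →ₗ[K] Vx x ⧸ Δ(V) x :=
  Submodule.mapQ _ _ (GD tl hd Vx Va x).subtype le_rfl

/-- The map `Λᵏ Γ(V) → Γ(Λᵏ V)` induced by the inclusion `Γ(V) ⊆ V`. -/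
noncomputable def extPowerGamma (k : ℕ) (x : Q₀) : ⋀[K]^k (Γ(V) x) →ₗ[K] Γ(Λ[k]V) x :=
  (extPowerMap k (Γ(V) x).subtype).codRestrict (Γ(Λ[k]V) x)
    fun α => range_extPowerMap_le_gamma k x ⟨α, rfl⟩

/-- The map `Λᵏ Γ(V) → rkf(Λᵏ V)` induced by the inclusion `Γ(V) ⊆ V`. -/
noncomputable def extPowerGammaToRkf (k : ℕ) (x : Q₀) :
    ⋀[K]^k (Γ(V) x) →ₗ[K] rkfSpace tl hd Λ[k]Vx Λ[k]Va x :=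
  gammaToRkf tl hd Λ[k]Vx Λ[k]Va x ∘ₗ extPowerGamma tl hd Vx Va k x

variable {tl hd Vx Va}

lemma isRepHom_gammaToRkf :
    IsRepHom tl hd (fun x => Γ(V) x) (gammaMap tl hd Vx Va) (rkfSpace tl hd Vx Va)
      (rkfMap tl hd Vx Va) (gammaToRkf tl hd Vx Va) :=
  fun _ _ => rfl

lemma gammaToRkf_eq_zero_iff {x : Q₀} {v : Γ(V) x} :
    gammaToRkf tl hd Vx Va x v = 0 ↔ (v : Vx x) ∈ Δ(V) x :=
  Submodule.Quotient.mk_eq_zero _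

lemma exists_mem_gammaToRkf_eq {x : Q₀} {p : Submodule K (Vx x)} (hp : p ≤ Γ(V) x)
    (hΓ : Γ(V) x ≤ p ⊔ Δ(V) x) (ξ : rkfSpace tl hd Vx Va x) :
    ∃ v, ∃ hv : v ∈ p, gammaToRkf tl hd Vx Va x ⟨v, hp hv⟩ = ξ := by
  obtain ⟨⟨w, hw⟩, rfl⟩ := Submodule.Quotient.mk_surjective _ ξ
  obtain ⟨v, hv, d, hd', rfl⟩ := Submodule.mem_sup.1 (sup_le hΓ le_sup_right hw)
  refine ⟨v, hv, (Submodule.Quotient.eq _).2 ?_⟩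
  simpa using hd'

lemma gammaToRkf_surjective (x : Q₀) : Function.Surjective (gammaToRkf tl hd Vx Va x) := by
  intro ξ
  obtain ⟨v, hv, rfl⟩ := exists_mem_gammaToRkf_eq le_rfl le_sup_left ξ
  exact ⟨_, rfl⟩

lemma rkfToQuot_injective (x : Q₀) : Function.Injective (rkfToQuot tl hd Vx Va x) := by
  rw [← LinearMap.ker_eq_bot, rkfToQuot, Submodule.ker_mapQ]
  exact Submodule.mkQ_map_self _

lemma rkfToQuot_comp_gammaToRkf (x : Q₀) :
    rkfToQuot tl hd Vx Va x ∘ₗ gammaToRkf tl hd Vx Va x = (Δ(V) x).mkQ ∘ₗ (Γ(V) x).subtype :=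
  rfl

lemma isRepHom_extPowerGamma (k : ℕ) :
    IsRepHom tl hd (fun x => ⋀[K]^k (Γ(V) x)) (fun a => extPowerMap k (gammaMap tl hd Vx Va a))
      (fun x => Γ(Λ[k]V) x) (gammaMap tl hd Λ[k]Vx Λ[k]Va) (extPowerGamma tl hd Vx Va k) :=
  fun a α => Subtype.ext (isRepHom_gamma_subtype.extPowerMap k a α)

lemma isRepHom_extPowerGammaToRkf (k : ℕ) :
    IsRepHom tl hd (fun x => ⋀[K]^k (Γ(V) x)) (fun a => extPowerMap k (gammaMap tl hd Vx Va a))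
      (rkfSpace tl hd Λ[k]Vx Λ[k]Va) (rkfMap tl hd Λ[k]Vx Λ[k]Va)
      (extPowerGammaToRkf tl hd Vx Va k) :=
  isRepHom_gammaToRkf.comp (isRepHom_extPowerGamma k)

lemma extPowerGammaToRkf_eq_zero_iff {k : ℕ} {x : Q₀} {α : ⋀[K]^k (Γ(V) x)} :
    extPowerGammaToRkf tl hd Vx Va k x α = 0
      ↔ extPowerMap k (Γ(V) x).subtype α ∈ Δ(Λ[k]V) x := by
  rw [extPowerGammaToRkf, LinearMap.comp_apply, gammaToRkf_eq_zero_iff]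
  rfl

lemma extPowerGammaToRkf_surjective [∀ x, FiniteDimensional K (Vx x)] {k : ℕ}
    (hk : (k.factorial : K) ≠ 0) (x : Q₀) :
    Function.Surjective (extPowerGammaToRkf tl hd Vx Va k x) := by
  intro ξ
  obtain ⟨_, ⟨α, rfl⟩, hα⟩ := exists_mem_gammaToRkf_eq (range_extPowerMap_le_gamma k x)
    (gamma_exteriorPower_le hk x) ξ
  exact ⟨α, hα⟩

lemma ker_extPowerMap_gammaToRkf_le (k : ℕ) (x : Q₀) :
    LinearMap.ker (extPowerMap k (gammaToRkf tl hd Vx Va x))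
      ≤ LinearMap.ker (extPowerGammaToRkf tl hd Vx Va k x) := by
  intro α hα
  rw [LinearMap.mem_ker] at hα
  obtain ⟨σ, hσ⟩ := LinearMap.exists_rightInverse_of_surjective (gammaToRkf tl hd Vx Va x)
    (LinearMap.range_eq_top.2 (gammaToRkf_surjective x))
  have sub_mem (v : Γ(V) x) : (v : Vx x) - σ (gammaToRkf tl hd Vx Va x v) ∈ Δ(V) x := by
    rw [← Submodule.coe_sub, ← gammaToRkf_eq_zero_iff, map_sub, sub_eq_zero]
    exact (LinearMap.congr_fun hσ _).symm
  have extPowerMap_sub_mem := extPowerMap_sub_extPowerMap_mem_delta (f := (Γ(V) x).subtype)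
    (g := ((Γ(V) x).subtype ∘ₗ σ) ∘ₗ gammaToRkf tl hd Vx Va x) (fun v => v.2)
    (fun v => (σ _).2) sub_mem α
  rw [extPowerMap_comp, LinearMap.comp_apply, hα, map_zero, sub_zero] at extPowerMap_sub_mem
  exact extPowerGammaToRkf_eq_zero_iff.2 extPowerMap_sub_mem

lemma ker_extPowerGammaToRkf_le (k : ℕ) (x : Q₀) :
    LinearMap.ker (extPowerGammaToRkf tl hd Vx Va k x)
      ≤ LinearMap.ker (extPowerMap k (gammaToRkf tl hd Vx Va x)) := by
  intro α hα
  have mkQ_eq_zero : extPowerMap k ((Δ(V) x).mkQ ∘ₗ (Γ(V) x).subtype) α = 0 := by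
    rw [extPowerMap_comp]
    exact delta_le_ker_extPowerMap k x (extPowerGammaToRkf_eq_zero_iff.1 hα)
  rw [← rkfToQuot_comp_gammaToRkf, extPowerMap_comp] at mkQ_eq_zero
  exact (map_eq_zero_iff _ (extPowerMap_injective k (rkfToQuot_injective x))).1 mkQ_eq_zero

end Rkf

theorem stmt_18_general {K : Type} [Field K] {Q₀ Q₁ : Type} (tl hd : Q₁ → Q₀)
    (Vx : Q₀ → Type) [∀ x, AddCommGroup (Vx x)] [∀ x, Module K (Vx x)]
    [∀ x, FiniteDimensional K (Vx x)]
    (Va : ∀ a : Q₁, Vx (tl a) →ₗ[K] Vx (hd a)) {k : ℕ} (hk : (k.factorial : K) ≠ 0) :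
    RepIso tl hd (fun x => ⋀[K]^k (rkfSpace tl hd Vx Va x))
      (fun a => extPowerMap k (rkfMap tl hd Vx Va a))
      (rkfSpace tl hd (fun y => ⋀[K]^k (Vx y)) (fun a => extPowerMap k (Va a)))
      (rkfMap tl hd (fun y => ⋀[K]^k (Vx y)) (fun a => extPowerMap k (Va a))) :=
  (isRepHom_gammaToRkf.extPowerMap k).repIso_of_ker_eq (isRepHom_extPowerGammaToRkf k)
    (fun x => extPowerMap_surjective k (gammaToRkf_surjective x))
    (extPowerGammaToRkf_surjective hk) fun x => le_antisymm
      (ker_extPowerMap_gammaToRkf_le k x) (ker_extPowerGammaToRkf_le k x)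

set_option maxHeartbeats 2000000 in
set_option synthInstance.maxHeartbeats 1000000 in
/-- in characteristic `0`, the global tensor functor commutes with exterior
powers: `rkf(Λᵏ V) ≅ Λᵏ(rkf V)` as representations of `Q`. -/
theorem stmt_18 {K : Type} [Field K] [CharZero K] {Q₀ Q₁ : Type} [Fintype Q₀] [Fintype Q₁]
    (tl hd : Q₁ → Q₀)
    (Vx : Q₀ → Type) [∀ x, AddCommGroup (Vx x)] [∀ x, Module K (Vx x)]
    [∀ x, FiniteDimensional K (Vx x)]
    (Va : ∀ a : Q₁, Vx (tl a) →ₗ[K] Vx (hd a)) (k : ℕ) :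
    ∃ ψ : ∀ x : Q₀,
        ↥(⋀[K]^k (rkfSpace tl hd Vx Va x)) ≃ₗ[K]
          rkfSpace tl hd (fun y => ↥(⋀[K]^k (Vx y))) (fun a => extPowerMap k (Va a)) x,
      ∀ (a : Q₁) (v : ↥(⋀[K]^k (rkfSpace tl hd Vx Va (tl a)))),
        ψ (hd a) (extPowerMap k (rkfMap tl hd Vx Va a) v)
          = rkfMap tl hd (fun y => ↥(⋀[K]^k (Vx y))) (fun a => extPowerMap k (Va a)) a
              (ψ (tl a) v) := by
  exact stmt_18_general tl hd Vx Va (Nat.cast_ne_zero.2 k.factorial_ne_zero)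
end

section
/- Let Q be the quiver with vertices 1, 2, 3, 4 and arrows a : 1 → 3, b : 2 → 3, c : 3 → 4. Let W be the representation with W_1 = W_2 = W_4 = K, W_3 = K², W_a = e₁ (inclusion as first coordinate), W_b = e₂ (inclusion as second coordinate), and W_c = (1 1) (the map (x,y) ↦ x+y). Let S₃ be the simple representation with (S₃)_3 = K and all other vertex spaces 0. Then W ⊗ W is isomorphic, as a representation of Q, to W ⊕ S₃ ⊕ S₃. -/
open Submodule

/-- Vertices `1, 2, 3, 4`. -/
inductive TQV | w1 | w2 | w3 | w4

/-- Arrows `a : 1 → 3`, `b : 2 → 3`, `c : 3 → 4`. -/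
inductive TQA | a | b | c

/-- Tails. -/
def TQt : TQA → TQV | .a => .w1 | .b => .w2 | .c => .w3

/-- Heads. -/
def TQh : TQA → TQV | .a => .w3 | .b => .w3 | .c => .w4

section TQ

variable (K : Type) [Field K]

/-- Vertex spaces of `W`: `K` at `1, 2, 4` and `K²` at `3`. -/
def TQWx : TQV → Type | .w3 => Fin 2 → K | _ => K

instance : ∀ x, AddCommGroup (TQWx K x)
  | .w1 => inferInstanceAs (AddCommGroup K)
  | .w2 => inferInstanceAs (AddCommGroup K)
  | .w3 => inferInstanceAs (AddCommGroup (Fin 2 → K))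
  | .w4 => inferInstanceAs (AddCommGroup K)

instance : ∀ x, Module K (TQWx K x)
  | .w1 => inferInstanceAs (Module K K)
  | .w2 => inferInstanceAs (Module K K)
  | .w3 => inferInstanceAs (Module K (Fin 2 → K))
  | .w4 => inferInstanceAs (Module K K)

/-- Arrow maps of `W`: `a ↦ e₁`, `b ↦ e₂`, `c ↦ (1 1)`. -/
noncomputable def TQWa : ∀ ar : TQA, TQWx K (TQt ar) →ₗ[K] TQWx K (TQh ar)
  | .a => LinearMap.toSpanSingleton K (Fin 2 → K) (Pi.single 0 1)
  | .b => LinearMap.toSpanSingleton K (Fin 2 → K) (Pi.single 1 1)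
  | .c => (LinearMap.proj 0 : (Fin 2 → K) →ₗ[K] K) + (LinearMap.proj 1 : (Fin 2 → K) →ₗ[K] K)

/-- Vertex spaces of the simple representation `S₃`: `K` at vertex `3`, `0` elsewhere. -/
def TQSx : TQV → Type | .w3 => K | _ => PUnit

instance : ∀ x, AddCommGroup (TQSx K x)
  | .w1 => inferInstanceAs (AddCommGroup PUnit)
  | .w2 => inferInstanceAs (AddCommGroup PUnit)
  | .w3 => inferInstanceAs (AddCommGroup K)
  | .w4 => inferInstanceAs (AddCommGroup PUnit)

instance : ∀ x, Module K (TQSx K x)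
  | .w1 => inferInstanceAs (Module K PUnit)
  | .w2 => inferInstanceAs (Module K PUnit)
  | .w3 => inferInstanceAs (Module K K)
  | .w4 => inferInstanceAs (Module K PUnit)

/-- Arrow maps of `S₃` (all zero). -/
def TQSa : ∀ ar : TQA, TQSx K (TQt ar) →ₗ[K] TQSx K (TQh ar) := fun _ => 0

end TQ

/-!
The constant representation `𝟙` (with `K` at every vertex and identity maps) is the unit for `⊗`,
and the coordinate sum `K² → K` at vertex `3`, together with the identity elsewhere, is a morphism
`ε : W → 𝟙`. Hence `ε ⊗ W` is a morphism `W ⊗ W → W`. The arrows `a` and `b` of `W ⊗ W` map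
into the spans of `e₁ ⊗ e₁` and `e₂ ⊗ e₂`, so the off-diagonal coordinates of `K² ⊗ K²` give two
morphisms `W ⊗ W → S₃`. The three morphisms together form a bijection at every vertex; at vertex
`3` they are the coordinates in the basis `e₁ ⊗ e₁`, `e₂ ⊗ e₂`, `e₁ ⊗ e₂ - e₂ ⊗ e₂`,
`e₂ ⊗ e₁ - e₁ ⊗ e₁` of `K² ⊗ K²`.
-/

open TensorProduct

section Coordinates

variable {R ι : Type*} [CommSemiring R]

/-- The augmentation of the free module `ι → R`, sending every standard basis vector to `1`. -/
def coordSum [Fintype ι] : (ι → R) →ₗ[R] R := ∑ i, LinearMap.proj i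

lemma coordSum_single [Fintype ι] [DecidableEq ι] (i : ι) (r : R) :
    coordSum (Pi.single i r) = r := by
  simp [coordSum]

/-- Ordered pairs of distinct elements of `ι`, indexing the off-diagonal entries of a square
matrix. -/
abbrev OffDiag (ι : Type*) : Type _ := {p : ι × ι // p.1 ≠ p.2}

/-- The matrix entries off the diagonal, as a linear map on `(ι → R) ⊗ (ι → R)`. -/
def offDiagEntries : (ι → R) ⊗[R] (ι → R) →ₗ[R] OffDiag ι → R :=
  LinearMap.pi fun p => LinearMap.mul' R R ∘ₗ map (LinearMap.proj p.1.1) (LinearMap.proj p.1.2)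

@[simp]
lemma offDiagEntries_tmul (u v : ι → R) (p : OffDiag ι) :
    offDiagEntries (u ⊗ₜ[R] v) p = u p.1.1 * v p.1.2 := by
  simp [offDiagEntries]

lemma offDiagEntries_single_tmul_single_self [DecidableEq ι] (i : ι) (r s : R) :
    offDiagEntries (Pi.single i r ⊗ₜ[R] Pi.single i s) = 0 := by
  ext ⟨⟨j, k⟩, hjk⟩
  rcases eq_or_ne j i with rfl | hj
  · simp [Pi.single_eq_of_ne hjk.symm]
  · simp [Pi.single_eq_of_ne hj]

lemma offDiagEntries_single_tmul_single [DecidableEq ι] (p : OffDiag ι) :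
    offDiagEntries (Pi.single p.1.1 1 ⊗ₜ[R] Pi.single p.1.2 1) = Pi.single p (1 : R) := by
  ext q
  simp only [offDiagEntries_tmul, Pi.single_apply, Subtype.ext_iff, Prod.ext_iff]
  split_ifs <;> simp_all

/-- The map `u ⊗ v ↦ (∑ uᵢ) v` together with the off-diagonal entries. -/
def sumAndOffDiag [Fintype ι] : (ι → R) ⊗[R] (ι → R) →ₗ[R] (ι → R) × (OffDiag ι → R) :=
  ((TensorProduct.lid R (ι → R)).toLinearMap ∘ₗ coordSum.rTensor (ι → R)).prod offDiagEntries

lemma sumAndOffDiag_tmul [Fintype ι] (u v : ι → R) :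
    sumAndOffDiag (u ⊗ₜ[R] v) = (coordSum u • v, offDiagEntries (u ⊗ₜ v)) := by
  simp [sumAndOffDiag]

end Coordinates

section TensorSelf

variable {R ι : Type*} [CommRing R] [Fintype ι] [DecidableEq ι]

/-- The inverse of `sumAndOffDiag`: the diagonal `eᵢ ↦ eᵢ ⊗ eᵢ` on the first factor, and
`e₍ᵢⱼ₎ ↦ eᵢ ⊗ eⱼ - eⱼ ⊗ eⱼ` on the second. -/
def diagAddOffDiag : (ι → R) × (OffDiag ι → R) →ₗ[R] (ι → R) ⊗[R] (ι → R) :=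
  (Fintype.linearCombination R fun i => Pi.single i 1 ⊗ₜ Pi.single i 1).coprod
    (Fintype.linearCombination R fun p : OffDiag ι =>
      Pi.single p.1.1 1 ⊗ₜ Pi.single p.1.2 1 - Pi.single p.1.2 1 ⊗ₜ Pi.single p.1.2 1)

lemma diagAddOffDiag_single_left (i : ι) :
    diagAddOffDiag (Pi.single i (1 : R), 0) = Pi.single i 1 ⊗ₜ Pi.single i 1 := by
  simp [diagAddOffDiag]

lemma diagAddOffDiag_single_right (p : OffDiag ι) :
    diagAddOffDiag (0, Pi.single p (1 : R)) =
      Pi.single p.1.1 1 ⊗ₜ Pi.single p.1.2 1 - Pi.single p.1.2 1 ⊗ₜ Pi.single p.1.2 1 := by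
  simp [diagAddOffDiag]

lemma sumAndOffDiag_comp_diagAddOffDiag :
    sumAndOffDiag ∘ₗ diagAddOffDiag (R := R) (ι := ι) = LinearMap.id := by
  refine LinearMap.prod_ext (LinearMap.pi_ext' fun i => ?_) (LinearMap.pi_ext' fun p => ?_) <;>
    apply LinearMap.ext_ring
  · simp [diagAddOffDiag_single_left, sumAndOffDiag_tmul, coordSum_single,
      offDiagEntries_single_tmul_single_self]
  · simp [diagAddOffDiag_single_right, sumAndOffDiag_tmul, coordSum_single,
      offDiagEntries_single_tmul_single_self, offDiagEntries_single_tmul_single]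

lemma diagAddOffDiag_comp_sumAndOffDiag :
    diagAddOffDiag ∘ₗ sumAndOffDiag (R := R) (ι := ι) = LinearMap.id := by
  ext i j : 6
  suffices h : diagAddOffDiag
      (Pi.single j (1 : R), offDiagEntries (Pi.single i 1 ⊗ₜ Pi.single j 1)) =
      Pi.single i 1 ⊗ₜ Pi.single j 1 by
    simpa [sumAndOffDiag_tmul, coordSum_single] using h
  rcases eq_or_ne i j with rfl | hij
  · rw [offDiagEntries_single_tmul_single_self, diagAddOffDiag_single_left]
  · rw [offDiagEntries_single_tmul_single ⟨(i, j), hij⟩, ← Prod.fst_add_snd (_, _), map_add,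
      diagAddOffDiag_single_left, diagAddOffDiag_single_right, add_sub_cancel]

/-- The tensor square of a free module, split into the module itself and the off-diagonal part. -/
def tensorSelfEquiv : (ι → R) ⊗[R] (ι → R) ≃ₗ[R] (ι → R) × (OffDiag ι → R) :=
  .ofLinearMap sumAndOffDiag diagAddOffDiag sumAndOffDiag_comp_diagAddOffDiag
    diagAddOffDiag_comp_sumAndOffDiag

lemma tensorSelfEquiv_tmul (u v : ι → R) :
    tensorSelfEquiv (u ⊗ₜ[R] v) = (coordSum u • v, offDiagEntries (u ⊗ₜ v)) :=
  sumAndOffDiag_tmul u v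

lemma tensorSelfEquiv_map_toSpanSingleton (i : ι) (t : R ⊗[R] R) :
    tensorSelfEquiv (map (LinearMap.toSpanSingleton R (ι → R) (Pi.single i 1))
      (LinearMap.toSpanSingleton R (ι → R) (Pi.single i 1)) t) =
      (LinearMap.toSpanSingleton R (ι → R) (Pi.single i 1) (TensorProduct.lid R R t), 0) := by
  induction t with
  | zero => simp only [map_zero, Prod.mk_zero_zero]
  | add x y hx hy => simp only [map_add, hx, hy, Prod.mk_add_mk, add_zero]
  | tmul r s =>
    simp [tensorSelfEquiv_tmul, ← Pi.single_smul', coordSum_single,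
      offDiagEntries_single_tmul_single_self]

lemma coordSum_tensorSelfEquiv_fst (t : (ι → R) ⊗[R] (ι → R)) :
    coordSum (tensorSelfEquiv t).1 = TensorProduct.lid R R (map coordSum coordSum t) := by
  induction t with
  | zero => simp
  | add x y hx hy => simp [hx, hy]
  | tmul u v => simp [tensorSelfEquiv_tmul]

/-- The two off-diagonal positions of a `2 × 2` matrix, indexed by their row. -/
def finTwoEquivOffDiag : Fin 2 ≃ OffDiag (Fin 2) where
  toFun i := ⟨(i, i.rev), by fin_cases i <;> decide⟩
  invFun p := p.1.1
  left_inv _ := rfl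
  right_inv := by decide

/-- `tensorSelfEquiv` for `R²`, with its two off-diagonal coordinates as separate factors: the
isomorphism `W ⊗ W ≅ W ⊕ S₃ ⊕ S₃` at vertex `3`. -/
def tensorSelfFinTwoEquiv : (Fin 2 → R) ⊗[R] (Fin 2 → R) ≃ₗ[R] (Fin 2 → R) × R × R :=
  tensorSelfEquiv.trans <| (LinearEquiv.refl R (Fin 2 → R)).prodCongr <|
    (LinearEquiv.funCongrLeft R R finTwoEquivOffDiag).trans (LinearEquiv.finTwoArrow R R)

lemma tensorSelfFinTwoEquiv_map_toSpanSingleton (i : Fin 2) (t : R ⊗[R] R) :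
    tensorSelfFinTwoEquiv (map (LinearMap.toSpanSingleton R (Fin 2 → R) (Pi.single i 1))
      (LinearMap.toSpanSingleton R (Fin 2 → R) (Pi.single i 1)) t) =
      (LinearMap.toSpanSingleton R (Fin 2 → R) (Pi.single i 1) (TensorProduct.lid R R t), 0) := by
  rw [tensorSelfFinTwoEquiv, LinearEquiv.trans_apply, tensorSelfEquiv_map_toSpanSingleton,
    LinearEquiv.prodCongr_apply, map_zero, LinearEquiv.refl_apply]

end TensorSelf

section Representation

variable (K : Type) [Field K]

/-- The vertex maps of the isomorphism `W ⊗ W ≅ W ⊕ S₃ ⊕ S₃`. Away from vertex `3` the copies of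
`S₃` vanish and the map is multiplication. -/
noncomputable def tensorSquareIso : ∀ x : TQV,
    TQWx K x ⊗[K] TQWx K x ≃ₗ[K] TQWx K x × TQSx K x × TQSx K x
  | .w3 => tensorSelfFinTwoEquiv (R := K)
  | .w1 | .w2 | .w4 => (TensorProduct.lid K K).trans <|
      (LinearEquiv.prodUnique (M₂ := PUnit.{1})).symm.trans <|
        (LinearEquiv.refl K K).prodCongr (LinearEquiv.prodUnique (M₂ := PUnit.{1})).symm

lemma TQWa_c_eq_coordSum : TQWa K .c = coordSum (R := K) (ι := Fin 2) :=
  (Fin.sum_univ_two _).symm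

end Representation

/-- for the quiver `1 → 3 ← 2`, `3 → 4` and the indecomposable representation
`W = (K, K, K², K; e₁, e₂, (1 1))`, there is an isomorphism of representations
`W ⊗ W ≅ W ⊕ S₃ ⊕ S₃`. -/
theorem stmt_19 {K : Type} [Field K] :
    RepIso TQt TQh
      (fun x => TensorProduct K (TQWx K x) (TQWx K x))
      (fun ar => TensorProduct.map (TQWa K ar) (TQWa K ar))
      (fun x => TQWx K x × TQSx K x × TQSx K x)
      (fun ar => (TQWa K ar).prodMap ((TQSa K ar).prodMap (TQSa K ar))) := by
  refine ⟨tensorSquareIso K, fun ar t => ?_⟩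
  cases ar with
  | a => exact tensorSelfFinTwoEquiv_map_toSpanSingleton 0 t
  | b => exact tensorSelfFinTwoEquiv_map_toSpanSingleton 1 t
  | c =>
    beta_reduce
    rw [TQWa_c_eq_coordSum]
    exact Prod.ext (coordSum_tensorSelfEquiv_fst t).symm rfl
end
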